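/- Fix an integer N ≥ −1 and scalars D_1, …, D_{N+1} ∈ K. For each integer i ≥ 1 define the R-linear endomorphism of P (the polynomial ring over R = K[ℏ] in the variables x^1, x^2, x^3, …): H_i = ℏ ∂_i + (ℏ²/2) Σ_{a,b ≥ 1, a+b = i+N} ∂_a ∂_b + (ℏ/2) Σ_{a ≥ max(1, i+N)} (2a − 2i − 2N + 1) x^{a−i−N+1} ∂_a + (1/8)(x^1)² [N = −1][i = 1] + (ℏ/16) [i = 1−N] + ℏ D_i [i ≤ N+1]. (These are the Virasoro operators of the Z₂-twisted Fock representation of the free boson vertex operator algebra after the dilaton shift; for N = −1 they are the Virasoro constraints annihilating the Kontsevich–Witten tau-function, and for N = 0 with D_1 = 0 those annihilating the Brézin–Gross–Witten tau-function.) Then for all integers i, j ≥ 1: [H_i, H_j] = ℏ (i − j) H_{i+j+N−1}. -/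

import Mathlib

/-!
Statement 6: the Z₂-twisted free-boson Virasoro operators (after dilaton shift)
`H_i = ℏ ∂_i + (ℏ²/2) Σ_{a,b≥1, a+b=i+N} ∂_a ∂_b
       + (ℏ/2) Σ_{a ≥ max(1,i+N)} (2a−2i−2N+1) x^{a−i−N+1} ∂_a
       + (1/8)(x¹)² [N=−1][i=1] + (ℏ/16) [i=1−N] + ℏ D_i [i ≤ N+1]`
acting on `P = K[ℏ][x¹, x², x³, …]` satisfy `[H_i, H_j] = ℏ (i−j) H_{i+j+N−1}`.
-/

noncomputable section

open MvPolynomial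

/-- The carrier: polynomials over `R = K[ℏ]` in variables `x^1, x^2, x^3, …`. -/
abbrev BosonSpace (K : Type) [Field K] := MvPolynomial ℕ+ (Polynomial K)

variable (K : Type) [Field K] [CharZero K]

/-- `ℏ`, as an element of `P` (acting by multiplication). -/
def hbar : BosonSpace K := MvPolynomial.C Polynomial.X

/-- A scalar `c : K`, as an element of `P`. -/
def cst (c : K) : BosonSpace K := MvPolynomial.C (Polynomial.C c)

/-- `∂_a` for `a ∈ ℤ`, with the convention that it vanishes for `a < 1`. -/
def Dop (a : ℤ) (p : BosonSpace K) : BosonSpace K :=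
  if h : 1 ≤ a then MvPolynomial.pderiv (⟨a.toNat, by omega⟩ : ℕ+) p else 0

/-- Multiplication by `x^a` for `a ∈ ℤ`, with the convention that it vanishes for `a < 1`. -/
def Xop (a : ℤ) (p : BosonSpace K) : BosonSpace K :=
  if h : 1 ≤ a then (MvPolynomial.X (⟨a.toNat, by omega⟩ : ℕ+) : BosonSpace K) * p else 0

/-- The twisted Virasoro operator
`H_i = ℏ ∂_i + (ℏ²/2) Σ_{a,b≥1, a+b=i+N} ∂_a ∂_b
       + (ℏ/2) Σ_{a ≥ max(1,i+N)} (2a−2i−2N+1) x^{a−i−N+1} ∂_a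
       + (1/8)(x¹)² [N=−1][i=1] + (ℏ/16) [i=1−N] + ℏ D_i [i ≤ N+1]`. -/
def Hop (N : ℤ) (D : ℤ → K) (i : ℤ) (p : BosonSpace K) : BosonSpace K :=
  hbar K * Dop K i p
    + cst K ((2 : K)⁻¹) * hbar K ^ 2 * (∑ᶠ a : ℤ, Dop K a (Dop K (i + N - a) p))
    + cst K ((2 : K)⁻¹) * hbar K *
        (∑ᶠ a : ℤ, ((2 * a - 2 * i - 2 * N + 1 : ℤ) : BosonSpace K) *
          Xop K (a - i - N + 1) (Dop K a p))
    + (if N = -1 ∧ i = 1 then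
        cst K ((8 : K)⁻¹) * (MvPolynomial.X (1 : ℕ+) : BosonSpace K) ^ 2 * p else 0)
    + (if i = 1 - N then cst K ((16 : K)⁻¹) * hbar K * p else 0)
    + (if i ≤ N + 1 then hbar K * cst K (D i) * p else 0)

set_option linter.unusedSectionVars false

/-- `∂_a` as a derivation. -/
def Dz (a : ℤ) : Derivation (Polynomial K) (BosonSpace K) (BosonSpace K) :=
  if h : 1 ≤ a then MvPolynomial.pderiv (⟨a.toNat, by omega⟩ : ℕ+) else 0

/-- `x^a` as a polynomial. -/
def xz (a : ℤ) : BosonSpace K :=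
  if h : 1 ≤ a then (MvPolynomial.X (⟨a.toNat, by omega⟩ : ℕ+) : BosonSpace K) else 0

lemma Dz_zero {a : ℤ} (h : ¬ 1 ≤ a) : Dz K a = 0 := by simp [Dz, h]

lemma Dop_eq (a : ℤ) (p : BosonSpace K) : Dop K a p = Dz K a p := by
  by_cases h : 1 ≤ a
  · have h1 : Dop K a p = pderiv (⟨a.toNat, by omega⟩ : ℕ+) p := dif_pos h
    have h2 : Dz K a = pderiv (⟨a.toNat, by omega⟩ : ℕ+) := dif_pos h
    rw [h1, h2]; rfl
  · have h1 : Dop K a p = 0 := dif_neg h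
    rw [h1, Dz_zero K h]; rfl

lemma Xop_eq (a : ℤ) (p : BosonSpace K) : Xop K a p = xz K a * p := by
  unfold Xop xz; split_ifs <;> simp

lemma xz_zero {a : ℤ} (h : ¬ 1 ≤ a) : xz K a = 0 := by simp [xz, h]

lemma xz_pnat (b : ℕ+) : xz K (b : ℤ) = X b := by
  have h : (1 : ℤ) ≤ (b : ℤ) := by exact_mod_cast b.2
  unfold xz
  rw [dif_pos h]
  congr 1

lemma Dz_pnat (b : ℕ+) : Dz K (b : ℤ) = pderiv b := by
  have h : (1 : ℤ) ≤ (b : ℤ) := by exact_mod_cast b.2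
  unfold Dz
  rw [dif_pos h]
  congr 1

lemma exists_pnat {a : ℤ} (h : 1 ≤ a) : ∃ b : ℕ+, a = (b : ℤ) :=
  ⟨⟨a.toNat, by omega⟩, by simp; omega⟩

lemma Dz_xz (a b : ℤ) : Dz K a (xz K b) = if a = b ∧ 1 ≤ a then 1 else 0 := by
  by_cases ha : 1 ≤ a
  · by_cases hb : 1 ≤ b
    · obtain ⟨a, rfl⟩ := exists_pnat ha
      obtain ⟨b, rfl⟩ := exists_pnat hb
      rw [Dz_pnat, xz_pnat, pderiv_X]
      by_cases hab : a = b
      · subst hab; simp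
      · have : ¬ ((a : ℤ) = (b : ℤ)) := by
          intro h; apply hab; apply PNat.eq; exact_mod_cast h
        simp [this, hab]
    · rw [xz_zero K hb, map_zero, if_neg]; omega
  · rw [Dz_zero K ha]; simp [ha]

lemma Dz_comm (a b : ℤ) (p : BosonSpace K) : Dz K a (Dz K b p) = Dz K b (Dz K a p) := by
  have h : ⁅Dz K a, Dz K b⁆ = 0 := by
    apply MvPolynomial.derivation_ext
    intro c
    rw [← xz_pnat, Derivation.commutator_apply, Dz_xz, Dz_xz]
    split_ifs <;> simp
  have := DFunLike.congr_fun h p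
  rw [Derivation.commutator_apply] at this
  simpa [sub_eq_zero] using this

lemma Dz_supp (p : BosonSpace K) : {a : ℤ | Dz K a p ≠ 0}.Finite := by
  apply Set.Finite.subset ((p.vars.finite_toSet).image (fun b : ℕ+ => (b : ℤ)))
  intro a ha
  by_cases h : 1 ≤ a
  · obtain ⟨b, rfl⟩ := exists_pnat h
    refine ⟨b, ?_, rfl⟩
    by_contra hb
    apply ha
    rw [Dz_pnat]
    exact pderiv_eq_zero_of_notMem_vars hb
  · exact absurd (by rw [Dz_zero K h]; rfl) ha

lemma T_supp (f : ℤ → BosonSpace K) (p : BosonSpace K) :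
    (Function.support fun a : ℤ => f a * Dz K a p).Finite := by
  apply Set.Finite.subset (Dz_supp K p)
  intro a ha h
  apply ha
  show f a * Dz K a p = 0
  rw [h, mul_zero]

/-- Locally finite vector field. -/
def Tz (f : ℤ → BosonSpace K) : Derivation (Polynomial K) (BosonSpace K) (BosonSpace K) :=
  Derivation.mk'
    { toFun := fun p => ∑ᶠ a : ℤ, f a * Dz K a p
      map_add' := by
        intro p q
        rw [← finsum_add_distrib (T_supp K f p) (T_supp K f q)]
        apply finsum_congr; intro a; rw [map_add, mul_add]
      map_smul' := by
        intro r p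
        rw [RingHom.id_apply, smul_finsum' r (T_supp K f p)]
        apply finsum_congr; intro a; rw [Derivation.map_smul, mul_smul_comm] }
    (by
      intro p q
      show (∑ᶠ a : ℤ, f a * Dz K a (p * q)) =
        p * (∑ᶠ a : ℤ, f a * Dz K a q) + q * (∑ᶠ a : ℤ, f a * Dz K a p)
      rw [mul_finsum' _ _ (T_supp K f p), mul_finsum' _ _ (T_supp K f q),
        ← finsum_add_distrib]
      · apply finsum_congr; intro a
        rw [Derivation.leibniz, smul_eq_mul, smul_eq_mul]; ring
      · apply Set.Finite.subset (T_supp K f q)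
        intro a ha h
        apply ha
        show p * (f a * Dz K a q) = 0
        rw [show f a * Dz K a q = 0 from h, mul_zero]
      · apply Set.Finite.subset (T_supp K f p)
        intro a ha h
        apply ha
        show q * (f a * Dz K a p) = 0
        rw [show f a * Dz K a p = 0 from h, mul_zero])

lemma Tz_apply (f : ℤ → BosonSpace K) (p : BosonSpace K) :
    Tz K f p = ∑ᶠ a : ℤ, f a * Dz K a p := rfl

lemma Tz_xz (f : ℤ → BosonSpace K) {b : ℤ} (hb : 1 ≤ b) : Tz K f (xz K b) = f b := by
  rw [Tz_apply, finsum_eq_single _ b]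
  · rw [Dz_xz]; simp [hb]
  · intro a ha; rw [Dz_xz]; simp [ha]

/-- coefficients of the vector field in `H_i`, with `s = i + N`. -/
def fz (s : ℤ) (a : ℤ) : BosonSpace K :=
  ((2 * a - 2 * s + 1 : ℤ) : BosonSpace K) * xz K (a - s + 1)

/-- The second order part. -/
def Sz (s : ℤ) (p : BosonSpace K) : BosonSpace K :=
  ∑ a ∈ Finset.Icc 1 (s - 1), Dz K a (Dz K (s - a) p)

/-- The multiplication part. -/
def qz (N : ℤ) (D : ℤ → K) (i : ℤ) : BosonSpace K :=
    (if N = -1 ∧ i = 1 then cst K ((8 : K)⁻¹) * (xz K 1) ^ 2 else 0)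
    + (if i = 1 - N then cst K ((16 : K)⁻¹) * hbar K else 0)
    + (if i ≤ N + 1 then hbar K * cst K (D i) else 0)

lemma Hop_eq (N : ℤ) (D : ℤ → K) (i : ℤ) (p : BosonSpace K) :
    Hop K N D i p = hbar K * Dz K i p + cst K ((2 : K)⁻¹) * hbar K ^ 2 * Sz K (i + N) p
      + cst K ((2 : K)⁻¹) * hbar K * Tz K (fz K (i + N)) p + qz K N D i * p := by
  have h1 : (∑ᶠ a : ℤ, Dop K a (Dop K (i + N - a) p)) = Sz K (i + N) p := by
    unfold Sz
    simp only [Dop_eq]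
    apply finsum_eq_sum_of_support_subset
    intro a ha
    simp only [Finset.coe_Icc, Set.mem_Icc]
    by_contra hc
    apply ha
    by_cases h1 : 1 ≤ a
    · show Dz K a (Dz K (i + N - a) p) = 0
      rw [Dz_zero K (a := i + N - a) (by omega)]; simp
    · show Dz K a (Dz K (i + N - a) p) = 0
      rw [Dz_zero K h1]; simp
  have h2 : (∑ᶠ a : ℤ, ((2 * a - 2 * i - 2 * N + 1 : ℤ) : BosonSpace K) *
          Xop K (a - i - N + 1) (Dop K a p)) = Tz K (fz K (i + N)) p := by
    rw [Tz_apply]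
    apply finsum_congr
    intro a
    rw [Xop_eq, Dop_eq, fz, ← mul_assoc]
    congr 3
    · congr 1; ring
    · congr 1; ring
  have h3 : (X (1 : ℕ+) : BosonSpace K) = xz K 1 := (xz_pnat K 1).symm
  unfold Hop qz
  rw [h1, h2, Dop_eq, h3]
  simp only [add_mul, ite_mul, zero_mul]
  ring

lemma D_hbar (E : Derivation (Polynomial K) (BosonSpace K) (BosonSpace K)) (p : BosonSpace K) :
    E (hbar K * p) = hbar K * E p := by
  have : ∀ q, hbar K * q = (Polynomial.X : Polynomial K) • q := by
    intro q; rw [hbar, MvPolynomial.smul_eq_C_mul]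
  rw [this, this, Derivation.map_smul]

lemma D_cst (E : Derivation (Polynomial K) (BosonSpace K) (BosonSpace K)) (c : K)
    (p : BosonSpace K) : E (cst K c * p) = cst K c * E p := by
  have : ∀ q, cst K c * q = (Polynomial.C c : Polynomial K) • q := by
    intro q; rw [cst, MvPolynomial.smul_eq_C_mul]
  rw [this, this, Derivation.map_smul]

lemma D_C (E : Derivation (Polynomial K) (BosonSpace K) (BosonSpace K)) (c : Polynomial K)
    (p : BosonSpace K) : E (C c * p) = C c * E p := by
  rw [← MvPolynomial.smul_eq_C_mul, ← MvPolynomial.smul_eq_C_mul, Derivation.map_smul]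

lemma Sz_C (s : ℤ) (c : Polynomial K) (p : BosonSpace K) :
    Sz K s (C c * p) = C c * Sz K s p := by
  simp only [Sz, D_C, Finset.mul_sum]

lemma Sz_add (s : ℤ) (p q : BosonSpace K) : Sz K s (p + q) = Sz K s p + Sz K s q := by
  simp only [Sz, map_add, Finset.sum_add_distrib]

lemma Sz_Dz (s k : ℤ) (p : BosonSpace K) : Sz K s (Dz K k p) = Dz K k (Sz K s p) := by
  simp only [Sz, map_sum]
  apply Finset.sum_congr rfl
  intro a _
  rw [Dz_comm K (s - a) k, Dz_comm K a k]

lemma Sz_xz (s k : ℤ) (hk : 1 ≤ k) (p : BosonSpace K) :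
    Sz K s (xz K k * p) = xz K k * Sz K s p + 2 * Dz K (s - k) p := by
  have key : ∀ a ∈ Finset.Icc 1 (s - 1), Dz K a (Dz K (s - a) (xz K k * p)) =
      xz K k * Dz K a (Dz K (s - a) p) + (if a = k then Dz K (s - k) p else 0)
        + (if a = s - k then Dz K (s - k) p else 0) := by
    intro a ha
    rw [Finset.mem_Icc] at ha
    have e1 : (if s - a = k ∧ 1 ≤ s - a then (1 : BosonSpace K) else 0)
      = if a = s - k then 1 else 0 := by
      congr 1; apply propext; omega
    have e2 : (if a = k ∧ 1 ≤ a then (1 : BosonSpace K) else 0)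
      = if a = k then 1 else 0 := by
      congr 1; apply propext; omega
    simp only [Derivation.leibniz, smul_eq_mul, map_add, Dz_xz, e1, e2]
    split_ifs with h1 h2 h2
    · have h3 : s - k = k := by omega
      subst h2; simp; rw [h3]
    · subst h1; simp
    · subst h2; simp
    · simp
  have hz : (if k ∈ Finset.Icc 1 (s - 1) then Dz K (s - k) p else 0) = Dz K (s - k) p := by
    split_ifs with h
    · rfl
    · rw [Finset.mem_Icc] at h; rw [Dz_zero K (a := s - k) (by omega)]; rfl
  have hz2 : (if s - k ∈ Finset.Icc 1 (s - 1) then Dz K (s - k) p else 0) = Dz K (s - k) p := by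
    split_ifs with h
    · rfl
    · rw [Finset.mem_Icc] at h; rw [Dz_zero K (a := s - k) (by omega)]; rfl
  rw [Sz, Finset.sum_congr rfl key, Finset.sum_add_distrib, Finset.sum_add_distrib,
    Finset.sum_ite_eq', Finset.sum_ite_eq', hz, hz2, ← Finset.mul_sum, Sz]
  ring

lemma Tz_Dz (s k : ℤ) (hk : 1 ≤ k) (p : BosonSpace K) :
    Tz K (fz K s) (Dz K k p) = Dz K k (Tz K (fz K s) p)
      - ((2 * k - 1 : ℤ) : BosonSpace K) * Dz K (k + s - 1) p := by
  have h : ⁅Dz K k, Tz K (fz K s)⁆ = ((2 * k - 1 : ℤ) : BosonSpace K) • Dz K (k + s - 1) := by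
    apply MvPolynomial.derivation_ext
    intro c
    have hc : (1 : ℤ) ≤ (c : ℤ) := by exact_mod_cast c.2
    rw [← xz_pnat, Derivation.commutator_apply, Tz_xz K _ hc, Derivation.smul_apply, Dz_xz, Dz_xz,
      fz, Derivation.leibniz, Derivation.map_intCast, Dz_xz]
    have e0 : Tz K (fz K s) (if k = (c : ℤ) ∧ 1 ≤ k then (1 : BosonSpace K) else 0) = 0 := by
      split_ifs <;> simp
    rw [e0]
    by_cases h : k + s - 1 = (c : ℤ)
    · rw [if_pos ⟨by omega, hk⟩, if_pos ⟨h, by omega⟩]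
      rw [← h]
      simp only [smul_eq_mul, mul_zero, sub_zero, add_zero, mul_one]
      congr 1; ring
    · rw [if_neg (by omega), if_neg (by omega)]; simp
  have := DFunLike.congr_fun h p
  rw [Derivation.commutator_apply, Derivation.smul_apply, smul_eq_mul] at this
  rw [← this]; ring

lemma half_two : cst K ((2 : K)⁻¹) * 2 = 1 := by
  have : (2 : BosonSpace K) = cst K 2 := by
    rw [cst, map_ofNat, map_ofNat]
  rw [this, cst, cst, ← map_mul, ← map_mul, inv_mul_cancel₀ two_ne_zero]; simp

lemma eighth : cst K ((8 : K)⁻¹) = cst K ((2 : K)⁻¹) ^ 3 := by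
  rw [cst, cst, ← map_pow, ← map_pow]; congr 2; norm_num

lemma sixteenth : cst K ((16 : K)⁻¹) = cst K ((2 : K)⁻¹) ^ 4 := by
  rw [cst, cst, ← map_pow, ← map_pow]; congr 2; norm_num

lemma D_hbar0 (E : Derivation (Polynomial K) (BosonSpace K) (BosonSpace K)) :
    E (hbar K) = 0 := by
  simpa using D_hbar K E 1

lemma D_cst0 (E : Derivation (Polynomial K) (BosonSpace K) (BosonSpace K)) (c : K) :
    E (cst K c) = 0 := by
  simpa using D_cst K E c 1

lemma hbar_ne : hbar K ≠ 0 := by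
  rw [hbar]; simp [Polynomial.X_ne_zero]

lemma H_add (N : ℤ) (D : ℤ → K) (i : ℤ) (p q : BosonSpace K) :
    Hop K N D i (p + q) = Hop K N D i p + Hop K N D i q := by
  simp only [Hop_eq, map_add, Sz_add]; ring

lemma H_C (N : ℤ) (D : ℤ → K) (i : ℤ) (c : Polynomial K) (p : BosonSpace K) :
    Hop K N D i (C c * p) = C c * Hop K N D i p := by
  simp only [Hop_eq, D_C, Sz_C]; ring

lemma H_zero (N : ℤ) (D : ℤ → K) (i : ℤ) : Hop K N D i 0 = 0 := by
  simpa using H_C K N D i 0 0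

lemma Dz_q (N : ℤ) (D : ℤ → K) (i k : ℤ) (hk : 1 ≤ k) : Dz K k (qz K N D i) =
    if N = -1 ∧ i = 1 ∧ k = 1 then cst K ((2 : K)⁻¹) ^ 2 * xz K 1 else 0 := by
  have h2 := half_two K
  by_cases h : N = -1 ∧ i = 1
  · obtain ⟨rfl, rfl⟩ := h
    by_cases h1 : k = 1
    · subst h1
      simp [qz, D_cst, D_hbar, D_cst0, D_hbar0, Derivation.leibniz_pow, Dz_xz, eighth]
      linear_combination (cst K ((2 : K)⁻¹) ^ 2 * xz K 1) * h2
    · simp [qz, D_cst, D_hbar, D_cst0, D_hbar0, Derivation.leibniz_pow, Dz_xz, h1]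
  · rw [if_neg (by tauto), qz, if_neg h]
    split_ifs <;> simp [D_cst, D_hbar, D_cst0, D_hbar0]

lemma H_Dz (N : ℤ) (D : ℤ → K) (i k : ℤ) (hk : 1 ≤ k) (p : BosonSpace K) :
    Hop K N D i (Dz K k p) = Dz K k (Hop K N D i p)
      - cst K ((2 : K)⁻¹) * hbar K * ((2 * k - 1 : ℤ) : BosonSpace K) * Dz K (k + (i + N) - 1) p
      - (if N = -1 ∧ i = 1 ∧ k = 1 then cst K ((2 : K)⁻¹) ^ 2 * xz K 1 else 0) * p := by
  rw [← Dz_q K N D i k hk, Hop_eq, Hop_eq, Sz_Dz, Tz_Dz K _ _ hk, Dz_comm K i k]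
  simp only [map_add, mul_assoc, pow_two, D_hbar, D_cst, Derivation.leibniz, smul_eq_mul,
    D_hbar0, D_cst0]
  ring

lemma H_xz (N : ℤ) (D : ℤ → K) (i k : ℤ) (hi : 1 ≤ i) (hk : 1 ≤ k) (p : BosonSpace K) :
    Hop K N D i (xz K k * p) = xz K k * Hop K N D i p
      + (if i = k then hbar K else 0) * p + hbar K ^ 2 * Dz K (i + N - k) p
      + cst K ((2 : K)⁻¹) * hbar K * fz K (i + N) k * p := by
  rw [Hop_eq, Hop_eq, Sz_xz K _ _ hk]
  simp only [Derivation.leibniz, smul_eq_mul, Tz_xz K _ hk, Dz_xz]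
  have h2 := half_two K
  have : (if i = k ∧ 1 ≤ i then (1 : BosonSpace K) else 0) = if i = k then 1 else 0 := by
    congr 1; apply propext; omega
  rw [this]
  split_ifs <;> linear_combination (hbar K ^ 2 * Dz K (i + N - k) p) * h2

/-- The boson modes. -/
def al (k : ℤ) (p : BosonSpace K) : BosonSpace K :=
  if 1 ≤ k then hbar K * Dz K k p
  else cst K ((2 : K)⁻¹) * ((1 - 2 * k : ℤ) : BosonSpace K) * (xz K (1 - k) * p)

lemma al_pos {k : ℤ} (h : 1 ≤ k) (p : BosonSpace K) : al K k p = hbar K * Dz K k p := if_pos h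

lemma al_neg {k : ℤ} (h : ¬ 1 ≤ k) (p : BosonSpace K) :
    al K k p = cst K ((2 : K)⁻¹) * ((1 - 2 * k : ℤ) : BosonSpace K) * (xz K (1 - k) * p) :=
  if_neg h

lemma al_add (k : ℤ) (p q : BosonSpace K) : al K k (p + q) = al K k p + al K k q := by
  unfold al; split_ifs
  · rw [map_add]; ring
  · ring

lemma al_C (k : ℤ) (c : Polynomial K) (p : BosonSpace K) :
    al K k (C c * p) = C c * al K k p := by
  unfold al; split_ifs
  · rw [D_C]; ring
  · ring

lemma H_hbar (N : ℤ) (D : ℤ → K) (i : ℤ) (p : BosonSpace K) :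
    Hop K N D i (hbar K * p) = hbar K * Hop K N D i p := H_C K N D i _ p

lemma H_cst (N : ℤ) (D : ℤ → K) (i : ℤ) (c : K) (p : BosonSpace K) :
    Hop K N D i (cst K c * p) = cst K c * Hop K N D i p := H_C K N D i _ p

lemma H_int (N : ℤ) (D : ℤ → K) (i : ℤ) (c : ℤ) (p : BosonSpace K) :
    Hop K N D i ((c : BosonSpace K) * p) = (c : BosonSpace K) * Hop K N D i p := by
  simpa using H_C K N D i (c : Polynomial K) p

lemma H_al (N : ℤ) (hN : -1 ≤ N) (D : ℤ → K) (i k : ℤ) (hi : 1 ≤ i) (p : BosonSpace K) :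
    Hop K N D i (al K k p) = al K k (Hop K N D i p)
      + hbar K * (cst K ((2 : K)⁻¹) * (((if i + k = 1 then 2 * i - 1 else 0 : ℤ) : BosonSpace K) * p))
      + hbar K * (cst K ((2 : K)⁻¹) * (((1 - 2 * k : ℤ) : BosonSpace K)
          * al K (i + N + k - 1) p)) := by
  by_cases hk : 1 ≤ k
  · rw [al_pos K hk, al_pos K hk, H_hbar, H_Dz K N D i k hk, if_neg (show ¬ i + k = 1 by omega)]
    by_cases h0 : N = -1 ∧ i = 1 ∧ k = 1
    · rw [if_pos h0]
      obtain ⟨rfl, rfl, rfl⟩ := h0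
      rw [al_neg K (by norm_num), Dz_zero K (a := 1 + (1 + -1) - 1) (by norm_num),
        show (1 : ℤ) - (1 + -1 + 1 - 1) = 1 by norm_num]
      simp only [Derivation.zero_apply]
      push_cast
      ring
    · rw [if_neg h0, al_pos K (by omega), show k + (i + N) - 1 = i + N + k - 1 by ring]
      push_cast
      ring
  · rw [al_neg K hk, al_neg K hk, mul_assoc, H_cst, H_int, H_xz K N D i (1 - k) hi (by omega)]
    have e : ((if i = 1 - k then hbar K else 0) * p) * ((1 - 2 * k : ℤ) : BosonSpace K)
        = hbar K * (((if i + k = 1 then 2 * i - 1 else 0 : ℤ) : BosonSpace K) * p) := by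
      by_cases h : i = 1 - k
      · rw [if_pos h, if_pos (by omega), show 1 - 2 * k = 2 * i - 1 by omega]; ring
      · rw [if_neg h, if_neg (by omega)]; simp
    by_cases h1 : 1 ≤ i + N + k - 1
    · rw [al_pos K h1, fz, xz_zero K (a := 1 - k - (i + N) + 1) (by omega),
        show i + N - (1 - k) = i + N + k - 1 by ring]
      linear_combination cst K ((2 : K)⁻¹) * e
    · rw [al_neg K h1, fz, Dz_zero K (a := i + N - (1 - k)) (by omega),
        show 1 - k - (i + N) + 1 = 1 - (i + N + k - 1) by ring,
        show 2 * (1 - k) - 2 * (i + N) + 1 = 1 - 2 * (i + N + k - 1) by ring]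
      simp only [Derivation.zero_apply]
      linear_combination cst K ((2 : K)⁻¹) * e

/-- The defect of the commutation relation. -/
def Ez (N : ℤ) (D : ℤ → K) (i j : ℤ) (p : BosonSpace K) : BosonSpace K :=
  Hop K N D i (Hop K N D j p) - Hop K N D j (Hop K N D i p)
        - hbar K * (((i - j : ℤ) : BosonSpace K) * Hop K N D (i + j + N - 1) p)

lemma E_add (N : ℤ) (D : ℤ → K) (i j : ℤ) (p q : BosonSpace K) :
    Ez K N D i j (p + q) = Ez K N D i j p + Ez K N D i j q := by
  simp only [Ez, H_add]; ring

lemma E_C (N : ℤ) (D : ℤ → K) (i j : ℤ) (c : Polynomial K) (p : BosonSpace K) :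
    Ez K N D i j (C c * p) = C c * Ez K N D i j p := by
  simp only [Ez, H_C]; ring

lemma al_hbar (i : ℤ) (p : BosonSpace K) :
    al K i (hbar K * p) = hbar K * al K i p := al_C K i _ p

lemma al_int (i : ℤ) (c : ℤ) (p : BosonSpace K) :
    al K i ((c : BosonSpace K) * p) = (c : BosonSpace K) * al K i p := by
  simpa using al_C K i (c : Polynomial K) p

lemma al_sub (k : ℤ) (p q : BosonSpace K) : al K k (p - q) = al K k p - al K k q := by
  have := al_add K k (p - q) q
  rw [sub_add_cancel] at this
  rw [this]; ring

lemma E_al (N : ℤ) (hN : -1 ≤ N) (D : ℤ → K) (i j k : ℤ) (hi : 1 ≤ i) (hj : 1 ≤ j)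
    (hn : 1 ≤ i + j + N - 1) (p : BosonSpace K) :
    Ez K N D i j (al K k p) = al K k (Ez K N D i j p) := by
  have h2 := half_two K
  simp only [Ez, al_sub, al_hbar, al_int, H_al K N hN D _ _ hi, H_al K N hN D _ _ hj,
    H_al K N hN D _ _ hn, H_add, H_hbar, H_cst, H_int]
  rw [show i + N + (j + N + k - 1) - 1 = i + j + N - 1 + N + k - 1 by ring,
    show j + N + (i + N + k - 1) - 1 = i + j + N - 1 + N + k - 1 by ring,
    show j + (i + N + k - 1) = i + j + N - 1 + k by ring,
    show i + (j + N + k - 1) = i + j + N - 1 + k by ring]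
  have hd : ((if i + j + N - 1 + k = 1 then 2 * (i + j + N - 1) - 1 else 0 : ℤ) : BosonSpace K)
      = (if i + j + N - 1 + k = 1 then 1 else 0) * (1 - 2 * k) := by
    split_ifs with h
    · rw [show 2 * (i + j + N - 1) - 1 = 1 - 2 * k by omega]; push_cast; ring
    · simp
  have hdi : ((if i + j + N - 1 + k = 1 then 2 * i - 1 else 0 : ℤ) : BosonSpace K)
      = (if i + j + N - 1 + k = 1 then 1 else 0) * (2 * i - 1) := by
    split_ifs <;> simp
  have hdj : ((if i + j + N - 1 + k = 1 then 2 * j - 1 else 0 : ℤ) : BosonSpace K)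
      = (if i + j + N - 1 + k = 1 then 1 else 0) * (2 * j - 1) := by
    split_ifs <;> simp
  rw [hd, hdi, hdj]
  generalize (if i + j + N - 1 + k = 1 then (1 : BosonSpace K) else 0) = d
  push_cast
  linear_combination (hbar K ^ 2 * cst K ((2 : K)⁻¹) * (1 - 2 * k) * (i - j) *
    (d * p + al K (i + j + N - 1 + N + k - 1) p)) * h2

lemma E_Dz (N : ℤ) (hN : -1 ≤ N) (D : ℤ → K) (i j : ℤ) (hi : 1 ≤ i) (hj : 1 ≤ j)
    (hn : 1 ≤ i + j + N - 1) (k : ℤ) (hk : 1 ≤ k) (p : BosonSpace K) :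
    Ez K N D i j (Dz K k p) = Dz K k (Ez K N D i j p) := by
  have h := E_al K N hN D i j k hi hj hn p
  rw [al_pos K hk, al_pos K hk, hbar, E_C] at h
  exact mul_left_cancel₀ (hbar_ne K) h

lemma E_xz (N : ℤ) (hN : -1 ≤ N) (D : ℤ → K) (i j : ℤ) (hi : 1 ≤ i) (hj : 1 ≤ j)
    (hn : 1 ≤ i + j + N - 1) (k : ℤ) (hk : 1 ≤ k) (p : BosonSpace K) :
    Ez K N D i j (xz K k * p) = xz K k * Ez K N D i j p := by
  have h := E_al K N hN D i j (1 - k) hi hj hn p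
  have h2 := half_two K
  have e : cst K ((2 : K)⁻¹) * ((1 - 2 * (1 - k) : ℤ) : BosonSpace K)
      = C (Polynomial.C ((2 : K)⁻¹) * ((1 - 2 * (1 - k) : ℤ) : Polynomial K)) := by
    rw [cst, map_mul, map_intCast]
  have e0 : cst K ((2 : K)⁻¹) * ((1 - 2 * (1 - k) : ℤ) : BosonSpace K) ≠ 0 := by
    apply mul_ne_zero
    · exact left_ne_zero_of_mul_eq_one h2
    · have : (1 - 2 * (1 - k) : ℤ) ≠ 0 := by omega
      exact_mod_cast this
  rw [al_neg K (by omega), al_neg K (by omega), e, E_C, ← e, show 1 - (1 - k) = k by ring] at h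
  exact mul_left_cancel₀ e0 h

lemma E_eq (N : ℤ) (hN : -1 ≤ N) (D : ℤ → K) (i j : ℤ) (hi : 1 ≤ i) (hj : 1 ≤ j)
    (hn : 1 ≤ i + j + N - 1) (p : BosonSpace K) :
    Ez K N D i j p = p * Ez K N D i j 1 := by
  induction p using MvPolynomial.induction_on with
  | C a => rw [← E_C, mul_one]
  | add p q hp hq => rw [E_add, hp, hq]; ring
  | mul_X p b hp =>
    have hb : (1 : ℤ) ≤ (b : ℤ) := by exact_mod_cast b.2
    rw [mul_comm, ← xz_pnat, E_xz K N hN D i j hi hj hn _ hb, hp]; ring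

lemma const_of_pderiv (f : BosonSpace K) (h : ∀ b : ℕ+, pderiv b f = 0)
    (h0 : constantCoeff f = 0) : f = 0 := by
  ext1 m
  by_cases hm : m = 0
  · subst hm; simpa [constantCoeff_eq] using h0
  · obtain ⟨b, hb⟩ : ∃ b, m b ≠ 0 := by
      by_contra hc; push Not at hc; exact hm (Finsupp.ext hc)
    have h1 := congrArg (coeff (m - Finsupp.single b 1)) (h b)
    have hle : Finsupp.single b 1 ≤ m := by
      rw [Finsupp.single_le_iff]; omega
    rw [coeff_pderiv, tsub_add_cancel_of_le hle, coeff_zero] at h1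
    rw [coeff_zero]
    rcases mul_eq_zero.1 h1 with h1 | h1
    · exact h1
    · exact absurd h1 (Nat.cast_add_one_ne_zero _)

lemma cc_T (s : ℤ) (hs : 0 ≤ s) (p : BosonSpace K) : constantCoeff (Tz K (fz K s) p) = 0 := by
  have hf : ∀ a, constantCoeff (fz K s a) = 0 := by
    intro a
    have : constantCoeff (xz K (a - s + 1)) = 0 := by
      by_cases h : 1 ≤ a - s + 1
      · obtain ⟨b, hb⟩ := exists_pnat h
        rw [hb, xz_pnat, constantCoeff_X]
      · rw [xz_zero K h, map_zero]
    rw [fz, map_mul, this, mul_zero]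
  rw [Tz_apply, finsum_eq_sum _ (T_supp K _ p), map_sum]
  apply Finset.sum_eq_zero
  intro a _
  rw [map_mul, hf, zero_mul]

/-- The constant in `H_i`. -/
def cz (N : ℤ) (D : ℤ → K) (i : ℤ) : BosonSpace K :=
    (if i = 1 - N then cst K ((16 : K)⁻¹) * hbar K else 0)
    + (if i ≤ N + 1 then hbar K * cst K (D i) else 0)

/-- The `x^2` term in `H_i`. -/
def yz (N i : ℤ) : BosonSpace K :=
    (if N = -1 ∧ i = 1 then cst K ((8 : K)⁻¹) * (xz K 1) ^ 2 else 0)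

lemma H_one (N : ℤ) (D : ℤ → K) (i : ℤ) : Hop K N D i 1 = yz K N i + cz K N D i := by
  rw [Hop_eq]
  simp [Sz, qz, yz, cz, add_assoc]

lemma cz_C (N : ℤ) (D : ℤ → K) (i : ℤ) : ∃ c, cz K N D i = C c := by
  refine ⟨(if i = 1 - N then Polynomial.C ((16 : K)⁻¹) * Polynomial.X else 0)
    + (if i ≤ N + 1 then Polynomial.X * Polynomial.C (D i) else 0), ?_⟩
  unfold cz cst hbar
  split_ifs <;> simp only [map_add, map_mul, map_zero]

lemma cc_y (N i : ℤ) : constantCoeff (yz K N i) = 0 := by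
  have : constantCoeff (xz K 1) = 0 := by
    rw [show (1 : ℤ) = ((1 : ℕ+) : ℤ) by rfl, xz_pnat]; simp
  unfold yz; split_ifs <;> simp [this]

lemma S_y (s : ℤ) (hs : s ≠ 2) : Sz K s (xz K 1 ^ 2) = 0 := by
  have t : ∀ a, Dz K a (2 : BosonSpace K) = 0 := by
    intro a; simpa using (Dz K a).map_natCast 2
  unfold Sz
  apply Finset.sum_eq_zero
  intro a ha
  have : s - a ≠ 1 ∨ a ≠ 1 := by omega
  rw [Derivation.leibniz_pow, Dz_xz]
  by_cases h : s - a = 1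
  · have h1 : a ≠ 1 := by omega
    simp [t, h, Dz_xz, h1, Derivation.leibniz]
  · simp [h]

lemma S_y2 : Sz K 2 (xz K 1 ^ 2) = 2 := by
  have t : ∀ a, Dz K a (2 : BosonSpace K) = 0 := by
    intro a; simpa using (Dz K a).map_natCast 2
  unfold Sz
  simp [t, Derivation.leibniz_pow, Dz_xz, Derivation.leibniz]

lemma cc_Hy (D : ℤ → K) (i : ℤ) (hi : 1 ≤ i) :
    constantCoeff (Hop K (-1) D i (xz K 1 ^ 2))
      = constantCoeff (if i = 3 then hbar K ^ 2 else 0) := by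
  have hx : constantCoeff (xz K 1) = 0 := by
    rw [show (1 : ℤ) = ((1 : ℕ+) : ℤ) by rfl, xz_pnat]; simp
  have h2 := half_two K
  rw [Hop_eq]
  simp only [map_add, map_mul, map_pow, cc_T K _ (show 0 ≤ i + -1 by omega), hx]
  have e1 : constantCoeff (Dz K i (xz K 1 ^ 2)) = 0 := by
    rw [Derivation.leibniz_pow]; simp [hx]
  rw [e1]
  by_cases h : i = 3
  · subst h
    rw [show (3 : ℤ) + -1 = 2 by norm_num, S_y2, if_pos rfl]
    have := congrArg constantCoeff h2
    rw [map_mul, map_one] at this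
    rw [map_pow]
    linear_combination (constantCoeff (hbar K)) ^ 2 * this
  · rw [S_y K _ (by omega), if_neg h]; simp

lemma cc_HH (N : ℤ) (D : ℤ → K) (i j : ℤ) (hi : 1 ≤ i) :
    constantCoeff (Hop K N D i (Hop K N D j 1)) =
     constantCoeff (cst K ((8 : K)⁻¹) * (if N = -1 ∧ j = 1 ∧ i = 3 then hbar K ^ 2 else 0)
       + cz K N D i * cz K N D j) := by
  obtain ⟨c, hc⟩ := cz_C K N D j
  rw [H_one, H_add, hc]
  have e : Hop K N D i (C c) = C c * (yz K N i + cz K N D i) := by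
    rw [← H_one, ← H_C, mul_one]
  rw [e, map_add, map_mul, map_add, cc_y, map_add, map_mul constantCoeff (cz K N D i)]
  have e2 : constantCoeff (Hop K N D i (yz K N j)) =
    constantCoeff (cst K ((8 : K)⁻¹) * (if N = -1 ∧ j = 1 ∧ i = 3 then hbar K ^ 2 else 0)) := by
    by_cases h : N = -1 ∧ j = 1
    · obtain ⟨rfl, rfl⟩ := h
      rw [yz, if_pos ⟨rfl, rfl⟩, H_cst, map_mul, cc_Hy K D i hi, map_mul]
      simp
    · rw [yz, if_neg h, H_zero, if_neg (by tauto)]; simp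
  rw [e2]; ring

lemma cc_E (N : ℤ) (hN : -1 ≤ N) (D : ℤ → K) (i j : ℤ) (hi : 1 ≤ i) (hj : 1 ≤ j)
    (hij : i ≠ j) : constantCoeff (Ez K N D i j 1) = 0 := by
  have h2 := half_two K
  have h8 := eighth K
  have h16 := sixteenth K
  rw [Ez, map_sub, map_sub, cc_HH K N D i j hi, cc_HH K N D j i hj, H_one, mul_add, mul_add,
    map_add constantCoeff (hbar K * _), map_mul constantCoeff (hbar K) (_ * yz K _ _),
    map_mul constantCoeff _ (yz K _ _), cc_y, mul_zero, mul_zero, zero_add, ← map_sub, ← map_sub]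
  suffices h : cst K ((8 : K)⁻¹) * (if N = -1 ∧ j = 1 ∧ i = 3 then hbar K ^ 2 else 0)
      - cst K ((8 : K)⁻¹) * (if N = -1 ∧ i = 1 ∧ j = 3 then hbar K ^ 2 else 0)
      - hbar K * (((i - j : ℤ) : BosonSpace K) * cz K N D (i + j + N - 1)) = 0 by
    have := congrArg constantCoeff h
    rw [map_zero] at this
    refine Eq.trans (congrArg constantCoeff ?_) this
    ring
  rw [cz, if_neg (show ¬ i + j + N - 1 ≤ N + 1 by omega)]
  by_cases ha : N = -1 ∧ j = 1 ∧ i = 3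
  · rw [if_pos ha, if_neg (by omega), if_pos (by omega)]
    obtain ⟨rfl, rfl, rfl⟩ := ha
    rw [h8, h16]
    push_cast
    linear_combination (-cst K ((2 : K)⁻¹) ^ 3 * hbar K ^ 2) * h2
  · by_cases hb : N = -1 ∧ i = 1 ∧ j = 3
    · rw [if_neg ha, if_pos hb, if_pos (by omega)]
      obtain ⟨rfl, rfl, rfl⟩ := hb
      rw [h8, h16]
      push_cast
      linear_combination (cst K ((2 : K)⁻¹) ^ 3 * hbar K ^ 2) * h2
    · rw [if_neg ha, if_neg hb, if_neg (by omega)]; simp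

/-- For every integer `N ≥ −1` and scalars `D_1, …, D_{N+1}`, the twisted
Virasoro operators `H_i`, `i ≥ 1` (for `N = −1` the Virasoro constraints of the
Kontsevich–Witten tau function, for `N = 0`, `D_1 = 0` those of the Brézin–Gross–Witten
tau function), satisfy `[H_i, H_j] = ℏ (i − j) H_{i+j+N−1}`. -/
theorem statement6 (N : ℤ) (hN : -1 ≤ N) (D : ℤ → K) :
    ∀ i j : ℤ, 1 ≤ i → 1 ≤ j → ∀ p : BosonSpace K,
      Hop K N D i (Hop K N D j p) - Hop K N D j (Hop K N D i p)
        = hbar K * ((i - j : ℤ) : BosonSpace K) * Hop K N D (i + j + N - 1) p := by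
  intro i j hi hj p
  by_cases hij : i = j
  · subst hij; simp
  · have hn : 1 ≤ i + j + N - 1 := by omega
    have h1 : Ez K N D i j 1 = 0 := by
      apply const_of_pderiv K _ _ (cc_E K N hN D i j hi hj hij)
      intro b
      have hb : (1 : ℤ) ≤ (b : ℤ) := by exact_mod_cast b.2
      rw [← Dz_pnat, ← E_Dz K N hN D i j hi hj hn _ hb, Derivation.map_one_eq_zero,
        E_eq K N hN D i j hi hj hn, zero_mul]
    have h := E_eq K N hN D i j hi hj hn p
    rw [h1, mul_zero, Ez] at h
    linear_combination h

end
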